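/- Let m ≥ 2 be an integer and let M, N be coprime integers with N odd and positive, and set ζ = e^{2πiM/N}. Then Z_{m,N}(ζ) = −(1/(8(2m−1)N²))·e^{−2πiM(2m−3)²/(8(2m−1)N)}·Σ_{k=0}^{(4m−2)N} k²·χ_{4m−2}(k)·e^{2πiMk²/(8(2m−1)N)}. -/

import Mathlib

open Finset

/-- The q-Pochhammer symbol `(x;q)_n = ∏_{j=0}^{n-1} (1 - x q^j)`. -/
noncomputable def qPoch (x q : ℂ) (n : ℕ) : ℂ := ∏ j ∈ Finset.range n, (1 - x * q ^ j)

/-- The Gaussian binomial coefficient `[n choose k]_q`. -/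
noncomputable def qBinom (q : ℂ) (n k : ℕ) : ℂ :=
  if k ≤ n then qPoch q q n / (qPoch q q (n - k) * qPoch q q k) else 0

/-- Extend a tuple `g : Fin k → ℕ` to `ℕ → ℕ` by zero. -/
def pad (k : ℕ) (g : Fin k → ℕ) : ℕ → ℕ := fun j => if h : j < k then g ⟨j, h⟩ else 0

/-- The general term of the multi-sum `P_m(q)`: here `n j` denotes `n_{j+1}` (0-based indexing),
so `n (m-2)` is `n_{m-1}` and `n 0` is `n_1`. -/
noncomputable def Pterm (m : ℕ) (q : ℂ) (n : ℕ → ℕ) : ℂ :=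
  (-1) ^ (n (m - 2)) *
    q ^ (n (m - 2) * (n (m - 2) + 1) / 2 + ∑ j ∈ Finset.range (m - 2), ((n j) ^ 2 + n j)) /
    qPoch (-q) q (n 0) *
    ∏ i ∈ Finset.range (m - 2), qBinom q (n (i + 1)) (n i)

/-- The multi-sum `P_m(q)`. -/
noncomputable def P (m : ℕ) (q : ℂ) : ℂ := ∑' n : Fin (m - 1) → ℕ, Pterm m q (pad (m - 1) n)

/-- The truncated multi-sum `Z_{m,N}(q)`. -/
noncomputable def Z (m N : ℕ) (q : ℂ) : ℂ :=
  ∑ n ∈ Fintype.piFinset (fun _ : Fin (m - 1) => Finset.range N), Pterm m q (pad (m - 1) n)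

/-- The odd periodic function `χ_{4m-2}`. -/
def chiP (m : ℕ) (k : ℤ) : ℤ :=
  if k % (4 * m - 2) = (2 * (m : ℤ) - 3) % (4 * m - 2) then 1
  else if k % (4 * m - 2) = (2 * (m : ℤ) + 1) % (4 * m - 2) then -1
  else 0

/-! The multi-sum `Z_{m,N}` is the last entry of a Bailey chain: at a primitive `N`-th root of unity
`q` one has `(-1)^n q^{n(n+1)/2} = q^{n(n+1)} [N-1 choose n]_q`, so the sum over `n_{m-1}` is one
more step of the chain. Deform the chain to the parameter `a = q y²`, starting from
`β n = 1 / (-qy; q)_n`. Since `(a; q)_{N+r} = (1 - y^{2N}) (a; q)_r`, the deformed sum times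
`1 - y^{2N}` is a truncated partial theta function in `y`. Both sides vanish at `y = 1`; comparing
derivatives there writes `Z_{m,N}(q)` as a finite Gauss sum with linear weight `k χ(k)`. Finally,
`χ(k) e^{2πiMk²/(8(2m-1)N)}` is odd under `k ↦ (4m-2)N - k`, which turns the weight `k` into
`k² / ((4m-2)N)`. -/

/-! ### Gaussian binomial coefficients -/

theorem qPoch_zero (x q : ℂ) : qPoch x q 0 = 1 := by simp [qPoch]

theorem qPoch_succ (x q : ℂ) (n : ℕ) : qPoch x q (n + 1) = qPoch x q n * (1 - x * q ^ n) :=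
  prod_range_succ _ n

theorem qPoch_add (x q : ℂ) (a b : ℕ) :
    qPoch x q (a + b) = qPoch x q a * qPoch (x * q ^ a) q b := by
  simp only [qPoch, prod_range_add, pow_add, mul_assoc]

theorem qPoch_succ_left (x q : ℂ) (n : ℕ) :
    qPoch x q (n + 1) = (1 - x) * qPoch (x * q) q n := by
  rw [add_comm, qPoch_add]
  simp [qPoch]

theorem qPoch_ne_zero_of_le {x q : ℂ} {m n : ℕ} (h : qPoch x q n ≠ 0) (hmn : m ≤ n) :
    qPoch x q m ≠ 0 := by
  obtain ⟨d, rfl⟩ := Nat.exists_eq_add_of_le hmn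
  exact left_ne_zero_of_mul (qPoch_add x q m d ▸ h)

theorem one_sub_mul_pow_ne_zero {x q : ℂ} {j n : ℕ} (h : qPoch x q n ≠ 0) (hj : j < n) :
    1 - x * q ^ j ≠ 0 :=
  prod_ne_zero_iff.1 h j (mem_range.2 hj)

theorem qPoch_ne_zero_of_pow_ne_one {x q : ℂ} {d : ℕ} (hq : q ^ d = 1) (hx : x ^ d ≠ 1) (n : ℕ) :
    qPoch x q n ≠ 0 := by
  refine prod_ne_zero_iff.2 fun j _ h => hx ?_
  calc x ^ d = (x * q ^ j) ^ d := by rw [mul_pow, ← pow_mul, mul_comm j, pow_mul, hq, one_pow,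
        mul_one]
    _ = 1 := by rw [← sub_eq_zero.1 h, one_pow]

theorem qBinom_of_lt {q : ℂ} {n r : ℕ} (h : n < r) : qBinom q n r = 0 :=
  if_neg h.not_ge

theorem qBinom_add (q : ℂ) (a b : ℕ) :
    qBinom q (a + b) a = qPoch q q (a + b) / (qPoch q q b * qPoch q q a) := by
  simp [qBinom]

theorem qBinom_zero_right {q : ℂ} {n : ℕ} (hq : qPoch q q n ≠ 0) : qBinom q n 0 = 1 := by
  simp [qBinom, qPoch_zero, hq]

theorem qBinom_succ_right_mul {q : ℂ} {n : ℕ} (hq : qPoch q q n ≠ 0) (r : ℕ) :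
    qBinom q n (r + 1) * (1 - q ^ (r + 1)) = qBinom q n r * (1 - q ^ (n - r)) := by
  rcases lt_trichotomy n r with h | rfl | h
  · rw [qBinom_of_lt h, qBinom_of_lt (h.trans r.lt_succ_self), zero_mul, zero_mul]
  · rw [qBinom_of_lt n.lt_succ_self, Nat.sub_self, pow_zero, sub_self, mul_zero, zero_mul]
  obtain ⟨d, rfl⟩ := Nat.exists_eq_add_of_lt h
  have hr := one_sub_mul_pow_ne_zero hq h
  have hd := one_sub_mul_pow_ne_zero hq (show d < r + d + 1 by lia)
  have hd' := qPoch_ne_zero_of_le hq (show d ≤ r + d + 1 by lia)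
  have hr' := qPoch_ne_zero_of_le hq h.le
  rw [add_right_comm r d 1, qBinom_add, add_right_comm r 1 d, add_assoc r d 1, qBinom_add,
    Nat.add_sub_cancel_left, qPoch_succ q q d, qPoch_succ q q r, pow_succ', pow_succ']
  field_simp

theorem qBinom_succ_succ_mul {q : ℂ} {n : ℕ} (hq : qPoch q q (n + 1) ≠ 0) (r : ℕ) :
    qBinom q (n + 1) (r + 1) * (1 - q ^ (r + 1)) = qBinom q n r * (1 - q ^ (n + 1)) := by
  rcases lt_or_ge n r with h | h
  · rw [qBinom_of_lt h, qBinom_of_lt (Nat.succ_lt_succ h), zero_mul, zero_mul]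
  obtain ⟨d, rfl⟩ := Nat.exists_eq_add_of_le h
  have hr := one_sub_mul_pow_ne_zero hq (Nat.lt_succ_of_le h)
  have hd' := qPoch_ne_zero_of_le hq (show d ≤ r + d + 1 by lia)
  have hr' := qPoch_ne_zero_of_le hq (h.trans (Nat.le_succ _))
  rw [add_right_comm r d 1, qBinom_add, qBinom_add, add_right_comm r 1 d,
    qPoch_succ q q (r + d), qPoch_succ q q r, pow_succ', pow_succ']
  field_simp

theorem qBinom_succ_left_mul {q : ℂ} {n : ℕ} (hq : qPoch q q (n + 1) ≠ 0) (r : ℕ) :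
    qBinom q (n + 1) r * (1 - q ^ (n + 1 - r)) = qBinom q n r * (1 - q ^ (n + 1)) := by
  rw [← qBinom_succ_right_mul hq, qBinom_succ_succ_mul hq]

theorem qBinom_succ_succ {q : ℂ} {n : ℕ} (hq : qPoch q q (n + 1) ≠ 0) (r : ℕ) :
    qBinom q (n + 1) (r + 1) = q ^ (r + 1) * qBinom q n (r + 1) + qBinom q n r := by
  rcases lt_or_ge n r with h | h
  · rw [qBinom_of_lt h, qBinom_of_lt (Nat.succ_lt_succ h), qBinom_of_lt (h.trans r.lt_succ_self),
      mul_zero, add_zero]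
  have hr : 1 - q ^ (r + 1) ≠ 0 := by
    simpa only [pow_succ'] using one_sub_mul_pow_ne_zero hq (Nat.lt_succ_of_le h)
  have hpow : q ^ (n + 1) = q ^ (r + 1) * q ^ (n - r) := by rw [← pow_add]; congr 1; lia
  refine mul_right_cancel₀ hr ?_
  linear_combination qBinom_succ_succ_mul hq r - qBinom q n r * hpow -
    q ^ (r + 1) * qBinom_succ_right_mul (qPoch_ne_zero_of_le hq n.le_succ) r

theorem qBinom_mul_qBinom {q : ℂ} {n : ℕ} (hq : qPoch q q n ≠ 0) {r s : ℕ} (h : r + s ≤ n) :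
    qBinom q n (r + s) * qBinom q (r + s) r = qBinom q n r * qBinom q (n - r) s := by
  obtain ⟨t, rfl⟩ := Nat.exists_eq_add_of_le h
  have hrs := qPoch_ne_zero_of_le hq h
  have hst := qPoch_ne_zero_of_le hq (show s + t ≤ r + s + t by lia)
  rw [qBinom_add, qBinom_add, add_assoc, qBinom_add, Nat.add_sub_cancel_left, qBinom_add]
  field_simp

theorem sum_qBinom_succ_mul {q : ℂ} {n : ℕ} (hq : qPoch q q (n + 1) ≠ 0) (f : ℕ → ℂ) :
    ∑ r ∈ range (n + 2), qBinom q (n + 1) r * f r =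
      ∑ r ∈ range (n + 1), qBinom q n r * (q ^ r * f r + f (r + 1)) := by
  have hq' := qPoch_ne_zero_of_le hq n.le_succ
  have hshift : ∑ r ∈ range (n + 1), q ^ (r + 1) * qBinom q n (r + 1) * f (r + 1) + f 0 =
      ∑ r ∈ range (n + 1), q ^ r * qBinom q n r * f r := by
    have h := sum_range_succ' (fun r => q ^ r * qBinom q n r * f r) (n + 1)
    rw [sum_range_succ, qBinom_of_lt n.lt_succ_self, qBinom_zero_right hq'] at h
    linear_combination -h
  calc ∑ r ∈ range (n + 2), qBinom q (n + 1) r * f r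
      = ∑ r ∈ range (n + 1),
          (q ^ (r + 1) * qBinom q n (r + 1) * f (r + 1) + qBinom q n r * f (r + 1)) + f 0 := by
        rw [sum_range_succ', qBinom_zero_right hq, one_mul]
        simp only [qBinom_succ_succ hq, add_mul]
    _ = ∑ r ∈ range (n + 1), q ^ r * qBinom q n r * f r +
          ∑ r ∈ range (n + 1), qBinom q n r * f (r + 1) := by
        rw [sum_add_distrib, add_right_comm, hshift]
    _ = ∑ r ∈ range (n + 1), qBinom q n r * (q ^ r * f r + f (r + 1)) := by
        rw [← sum_add_distrib]
        exact sum_congr rfl fun r _ => by ring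

/-- The limiting case of the `q`-Chu-Vandermonde summation in which one numerator parameter tends
to infinity. -/
theorem sum_qBinom_mul_div_qPoch {q A : ℂ} {n : ℕ} (hq : qPoch q q n ≠ 0)
    (hA : qPoch (A * q) q n ≠ 0) :
    ∑ s ∈ range (n + 1), qBinom q n s * (A ^ s * q ^ s ^ 2 / qPoch (A * q) q s) =
      (qPoch (A * q) q n)⁻¹ := by
  induction n generalizing A with
  | zero => simp [qBinom, qPoch_zero]
  | succ n ih =>
    rw [qPoch_succ_left] at hA
    have hfirst := left_ne_zero_of_mul hA
    rw [sum_qBinom_succ_mul hq, qPoch_succ_left, mul_inv,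
      ← ih (qPoch_ne_zero_of_le hq n.le_succ) (right_ne_zero_of_mul hA), mul_sum]
    refine sum_congr rfl fun s hs => ?_
    have hs := qPoch_ne_zero_of_le (right_ne_zero_of_mul hA) (mem_range_succ_iff.1 hs)
    have hshift : qPoch (A * q) q s * (1 - A * q * q ^ s) =
        (1 - A * q) * qPoch (A * q * q) q s := by
      rw [← qPoch_succ, qPoch_succ_left]
    have hne : qPoch (A * q) q s * (1 - A * q * q ^ s) ≠ 0 :=
      hshift ▸ mul_ne_zero hfirst hs
    have hP := left_ne_zero_of_mul hne
    have hlast := right_ne_zero_of_mul hne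
    have hsq : q ^ (s + 1) ^ 2 = q ^ s ^ 2 * (q ^ s * q ^ s * q) := by ring
    rw [qPoch_succ, eq_div_of_mul_eq hfirst ((mul_comm _ _).trans hshift.symm), hsq, mul_pow]
    generalize hx : 1 - A * q * q ^ s = x at hlast ⊢
    field_simp
    rw [← hx]
    ring

/-! ### Bailey pairs -/

/-- `(α, β)` is a Bailey pair up to level `L` relative to `a`. In the classical notation
`β' n = ∑ r ≤ n, α' r / ((q)_{n-r} (aq)_{n+r})`, our sequences are `β n = (q)_n β' n` and
`α r = (1 - a) (q)_r α' r`, which turns the kernel into a Gaussian binomial. -/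
def IsBaileyPair (L : ℕ) (a q : ℂ) (α β : ℕ → ℂ) : Prop :=
  ∀ n ≤ L, β n = ∑ r ∈ range (n + 1), qBinom q n r * α r / qPoch a q (n + r + 1)

/-- The effect on `β` of one step of the Bailey chain, both parameters of Bailey's lemma being sent
to infinity. -/
noncomputable def baileyStep (a q : ℂ) (β : ℕ → ℂ) (n : ℕ) : ℂ :=
  ∑ r ∈ range (n + 1), a ^ r * q ^ r ^ 2 * qBinom q n r * β r

theorem sum_qBinom_mul_qBinom_div_qPoch {a q : ℂ} {n r : ℕ} (hq : qPoch q q n ≠ 0)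
    (ha : qPoch a q (n + r + 1) ≠ 0) (hr : r ≤ n) :
    ∑ s ∈ range (n - r + 1), a ^ (r + s) * q ^ (r + s) ^ 2 * qBinom q n (r + s) *
        (qBinom q (r + s) r / qPoch a q (r + s + r + 1)) =
      a ^ r * q ^ r ^ 2 * qBinom q n r / qPoch a q (n + r + 1) := by
  have hsplit : ∀ s, qPoch a q (r + s + r + 1) =
      qPoch a q (2 * r + 1) * qPoch (a * q ^ (2 * r) * q) q s := fun s => by
    rw [mul_assoc, ← pow_succ, ← qPoch_add]
    congr 1
    ring
  have hn : n + r + 1 = r + (n - r) + r + 1 := by lia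
  rw [hn, hsplit] at ha ⊢
  have hq' := qPoch_ne_zero_of_le hq (n.sub_le r)
  rw [div_mul_eq_div_div, div_eq_mul_inv _ (qPoch (_ * q) q _),
    ← sum_qBinom_mul_div_qPoch hq' (right_ne_zero_of_mul ha), mul_sum]
  refine sum_congr rfl fun s hs => ?_
  have htri := qBinom_mul_qBinom hq (show r + s ≤ n by grind)
  rw [hsplit]
  calc a ^ (r + s) * q ^ (r + s) ^ 2 * qBinom q n (r + s) * (qBinom q (r + s) r /
        (qPoch a q (2 * r + 1) * qPoch (a * q ^ (2 * r) * q) q s))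
      = a ^ (r + s) * q ^ (r + s) ^ 2 * (qBinom q n (r + s) * qBinom q (r + s) r) /
          (qPoch a q (2 * r + 1) * qPoch (a * q ^ (2 * r) * q) q s) := by ring
    _ = _ := by
      rw [htri]
      ring

theorem IsBaileyPair.step {L : ℕ} {a q : ℂ} {α β : ℕ → ℂ} (hq : qPoch q q L ≠ 0)
    (ha : qPoch a q (2 * L + 1) ≠ 0) (h : IsBaileyPair L a q α β) :
    IsBaileyPair L a q (fun r => a ^ r * q ^ r ^ 2 * α r) (baileyStep a q β) := by
  intro n hn
  have hqn := qPoch_ne_zero_of_le hq hn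
  have hterm : ∀ t ∈ range (n + 1), a ^ t * q ^ t ^ 2 * qBinom q n t * β t =
      ∑ r ∈ range (t + 1), a ^ t * q ^ t ^ 2 * qBinom q n t *
        (qBinom q t r / qPoch a q (t + r + 1)) * α r := fun t ht => by
    rw [h t (by grind), mul_sum]
    exact sum_congr rfl fun r _ => by ring
  rw [baileyStep, sum_congr rfl hterm]
  calc _ = ∑ r ∈ range (n + 1), ∑ s ∈ range (n + 1 - r),
        a ^ (r + s) * q ^ (r + s) ^ 2 * qBinom q n (r + s) *
          (qBinom q (r + s) r / qPoch a q (r + s + r + 1)) * α r := by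
        rw [← sum_range_diag_flip]
        refine sum_congr rfl fun t _ => sum_congr rfl fun r hr => ?_
        rw [Nat.add_sub_cancel' (mem_range_succ_iff.1 hr)]
    _ = _ := by
        refine sum_congr rfl fun r hr => ?_
        have hr' := mem_range_succ_iff.1 hr
        rw [← sum_mul, Nat.succ_sub hr', sum_qBinom_mul_qBinom_div_qPoch hqn
          (qPoch_ne_zero_of_le ha (by lia)) hr']
        ring

theorem IsBaileyPair.iterate_step {L : ℕ} {a q : ℂ} {α β : ℕ → ℂ} (hq : qPoch q q L ≠ 0)
    (ha : qPoch a q (2 * L + 1) ≠ 0) (h : IsBaileyPair L a q α β) (i : ℕ) :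
    IsBaileyPair L a q (fun r => (a ^ r * q ^ r ^ 2) ^ i * α r) ((baileyStep a q)^[i] β) := by
  induction i with
  | zero => simpa using h
  | succ i ih =>
    rw [Function.iterate_succ_apply']
    simpa only [pow_succ', mul_assoc] using ih.step hq ha

/-- The `α`-sequence, relative to `a = q y²`, of the Bailey pair with `β n = 1 / (-qy; q)_n`. -/
noncomputable def seedAlpha (q y : ℂ) (r : ℕ) : ℂ :=
  (-y) ^ r * q ^ r ^ 2 * qPoch (q * y ^ 2) q r * (1 - q * y ^ 2 * q ^ (2 * r))

/-- The `r`-th term of the sum that expresses `β n` through `seedAlpha`. -/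
noncomputable def seedTerm (q y : ℂ) (n r : ℕ) : ℂ :=
  qBinom q n r * seedAlpha q y r / qPoch (q * y ^ 2) q (n + r + 1)

/-- The Wilf-Zeilberger certificate for the sum of `seedTerm q y n` over `r`. -/
noncomputable def seedCertificate (q y : ℂ) (n r : ℕ) : ℂ :=
  (-y) ^ r * q ^ r ^ 2 * qPoch (q * y ^ 2) q r * (1 + y * q ^ r) * (1 - q ^ r) * q ^ (n + 1 - r) *
    qBinom q (n + 1) r / qPoch (q * y ^ 2) q (n + r + 1)

theorem seedTerm_sub_eq_seedCertificate_sub {q y : ℂ} {n r : ℕ} (hq : qPoch q q (n + 1) ≠ 0)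
    (ha : qPoch (q * y ^ 2) q (n + r + 2) ≠ 0) (hr : r ≤ n + 1) :
    (1 - q ^ (n + 1)) * ((1 + y * q ^ (n + 1)) * seedTerm q y (n + 1) r - seedTerm q y n r) =
      seedCertificate q y n r - seedCertificate q y n (r + 1) := by
  have hright := qBinom_succ_right_mul hq r
  have hleft := qBinom_succ_left_mul hq r
  have hpow : q * q ^ (n - r) * (1 - q ^ (n + 1 - r)) =
      q ^ (n + 1 - r) * (1 - q ^ (n + 1 - r)) := by
    rcases hr.eq_or_lt with rfl | hlt
    · simp
    · rw [← pow_succ', Nat.succ_sub (Nat.lt_succ_iff.1 hlt)]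
  have hn : q ^ (n + 1) = q ^ (n + 1 - r) * q ^ r := by rw [← pow_add, Nat.sub_add_cancel hr]
  have hlast : q * y ^ 2 * q ^ (n + r + 1) = q * y ^ 2 * (q ^ (n + 1 - r) * q ^ r * q ^ r) := by
    rw [← hn]
    ring
  rw [qPoch_succ, hlast] at ha
  have ha₁ := left_ne_zero_of_mul ha
  have ha₂ := right_ne_zero_of_mul ha
  simp only [seedTerm, seedCertificate, seedAlpha, Nat.add_sub_add_right,
    show n + 1 + r + 1 = n + r + 1 + 1 by ring, ← add_assoc]
  rw [qPoch_succ _ _ (n + r + 1), qPoch_succ _ _ r, hlast]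
  rw [hn] at hleft ⊢
  generalize hD : 1 - q * y ^ 2 * (q ^ (n + 1 - r) * q ^ r * q ^ r) = D at ha₂ ⊢
  generalize qPoch (q * y ^ 2) q (n + r + 1) = P at ha₁ ⊢
  generalize qPoch (q * y ^ 2) q r = R
  field_simp
  rw [← hD]
  generalize q ^ (n + 1 - r) = p at *
  linear_combination (-y) ^ r * q ^ r ^ 2 * R * (
    (1 - q * y ^ 2 * q ^ (2 * r)) * (1 - q * y ^ 2 * (p * q ^ r * q ^ r)) * hleft -
    y * q ^ (2 * r) * (1 - q * y ^ 2 * q ^ r) * (1 + y * q * q ^ r) *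
      (q * q ^ (n - r) * hright + qBinom q (n + 1) r * hpow))

theorem sum_seedTerm_succ {q y : ℂ} {n : ℕ} (hq : qPoch q q (n + 1) ≠ 0)
    (ha : qPoch (q * y ^ 2) q (2 * n + 3) ≠ 0) :
    (1 + y * q ^ (n + 1)) * ∑ r ∈ range (n + 2), seedTerm q y (n + 1) r =
      ∑ r ∈ range (n + 1), seedTerm q y n r := by
  have hfirst : seedCertificate q y n 0 = 0 := by simp [seedCertificate]
  have hlast : seedCertificate q y n (n + 2) = 0 := by
    simp [seedCertificate, qBinom_of_lt (Nat.lt_succ_self (n + 1))]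
  have htop : seedTerm q y n (n + 1) = 0 := by
    simp [seedTerm, qBinom_of_lt (Nat.lt_succ_self n)]
  have hne : 1 - q ^ (n + 1) ≠ 0 := by
    simpa only [pow_succ'] using one_sub_mul_pow_ne_zero hq n.lt_succ_self
  refine sub_eq_zero.1 ((mul_eq_zero.1 ?_).resolve_left hne)
  calc _ = ∑ r ∈ range (n + 2), (1 - q ^ (n + 1)) *
        ((1 + y * q ^ (n + 1)) * seedTerm q y (n + 1) r - seedTerm q y n r) := by
        rw [← mul_sum, sum_sub_distrib, ← mul_sum, sum_range_succ (seedTerm q y n) (n + 1), htop,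
          add_zero]
    _ = ∑ r ∈ range (n + 2), (seedCertificate q y n r - seedCertificate q y n (r + 1)) :=
        sum_congr rfl fun r hr => seedTerm_sub_eq_seedCertificate_sub hq
          (qPoch_ne_zero_of_le ha (by grind)) (by grind)
    _ = 0 := by rw [sum_range_sub', hfirst, hlast, sub_zero]

theorem isBaileyPair_seedAlpha {q y : ℂ} {L : ℕ} (hq : qPoch q q L ≠ 0)
    (ha : qPoch (q * y ^ 2) q (2 * L + 1) ≠ 0) (hy : qPoch (-(q * y)) q L ≠ 0) :
    IsBaileyPair L (q * y ^ 2) q (seedAlpha q y) (fun n => (qPoch (-(q * y)) q n)⁻¹) := by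
  intro n hn
  change (qPoch (-(q * y)) q n)⁻¹ = ∑ r ∈ range (n + 1), seedTerm q y n r
  induction n with
  | zero =>
    have h := one_sub_mul_pow_ne_zero ha (Nat.succ_pos (2 * L))
    simpa [seedTerm, seedAlpha, qBinom, qPoch] using (div_self h).symm
  | succ n ih =>
    have hfactor : 1 - -(q * y) * q ^ n = 1 + y * q ^ (n + 1) := by ring
    have hne : 1 + y * q ^ (n + 1) ≠ 0 := hfactor ▸ one_sub_mul_pow_ne_zero hy hn
    rw [qPoch_succ, hfactor, mul_inv, ih (by lia), ← sum_seedTerm_succ (qPoch_ne_zero_of_le hq hn)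
      (qPoch_ne_zero_of_le ha (by lia)), mul_right_comm, mul_inv_cancel₀ hne, one_mul]

/-! ### Specialization at roots of unity -/

theorem qPoch_of_isPrimitiveRoot {q : ℂ} {N : ℕ} (hq : IsPrimitiveRoot q N) (hN : 0 < N) (x : ℂ) :
    qPoch x q N = 1 - x ^ N := by
  have h := congrArg (Polynomial.eval 1) (X_pow_sub_C_eq_prod hq hN (rfl : x ^ N = x ^ N))
  simpa [Polynomial.eval_prod, qPoch, mul_comm] using h.symm

theorem qPoch_self_ne_zero_of_isPrimitiveRoot {q : ℂ} {N : ℕ} (hq : IsPrimitiveRoot q N) :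
    qPoch q q (N - 1) ≠ 0 :=
  prod_ne_zero_iff.2 fun j hj h => by
    rw [mem_range] at hj
    rw [← pow_succ', sub_eq_zero] at h
    exact hq.pow_ne_one_of_pos_of_lt j.succ_ne_zero (by lia) h.symm

theorem qBinom_pred_of_isPrimitiveRoot {q : ℂ} {N : ℕ} (hq : IsPrimitiveRoot q N) {r : ℕ}
    (hr : r < N) : q ^ (r + 1).choose 2 * qBinom q (N - 1) r = (-1) ^ r := by
  have hN := qPoch_self_ne_zero_of_isPrimitiveRoot hq
  induction r with
  | zero => simp [qBinom_zero_right hN]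
  | succ r ih =>
    have hone : q ^ (r + 1) * q ^ (N - 1 - r) = 1 := by
      rw [← pow_add, ← hq.pow_eq_one]
      congr 1
      lia
    have hne : 1 - q ^ (r + 1) ≠ 0 :=
      sub_ne_zero.2 (hq.pow_ne_one_of_pos_of_lt r.succ_ne_zero hr).symm
    refine mul_right_cancel₀ hne ?_
    rw [Nat.choose_succ_succ', Nat.choose_one_right, pow_add]
    linear_combination q ^ (r + 1) * q ^ (r + 1).choose 2 * qBinom_succ_right_mul hN r -
      (1 - q ^ (r + 1)) * ih (by lia) - q ^ (r + 1).choose 2 * qBinom q (N - 1) r * hone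

theorem IsBaileyPair.one_sub_pow_mul {a q : ℂ} {N : ℕ} {α β : ℕ → ℂ}
    (h : IsBaileyPair (N - 1) a q α β) (hq : IsPrimitiveRoot q N) (ha : a ^ N ≠ 1) :
    (1 - a ^ N) * β (N - 1) = ∑ r ∈ range N, qBinom q (N - 1) r * α r / qPoch a q r := by
  have hN : 0 < N := Nat.pos_of_ne_zero fun h => ha (by rw [h, pow_zero])
  rw [h _ le_rfl, Nat.sub_add_cancel hN, mul_sum]
  refine sum_congr rfl fun r _ => ?_
  rw [add_right_comm, Nat.sub_add_cancel hN, qPoch_add, hq.pow_eq_one, mul_one,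
    qPoch_of_isPrimitiveRoot hq hN, ← mul_div_assoc, mul_div_mul_left _ _ (sub_ne_zero.2 ha.symm)]

/-- The exponent of `q` in the `r`-th term of the partial theta function that the `i`-fold iterate
of the seed pair produces at a root of unity. -/
def thetaExponent (i r : ℕ) : ℕ := r.choose 2 + i * (r ^ 2 + r)

theorem sq_eq_choose_add_choose (r : ℕ) : r ^ 2 = (r + 1).choose 2 + r.choose 2 := by
  induction r with
  | zero => rfl
  | succ r ih => grind [Nat.choose_succ_succ', Nat.choose_one_right]

theorem one_sub_pow_mul_iterate_baileyStep {q y : ℂ} {N : ℕ} (hq : IsPrimitiveRoot q N)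
    (hy : y ^ (2 * N) ≠ 1) (i : ℕ) :
    (1 - y ^ (2 * N)) *
        (baileyStep (q * y ^ 2) q)^[i] (fun n => (qPoch (-(q * y)) q n)⁻¹) (N - 1) =
      ∑ r ∈ range N,
        q ^ thetaExponent i r * y ^ ((2 * i + 1) * r) * (1 - y ^ 2 * q ^ (2 * r + 1)) := by
  have haN : (q * y ^ 2) ^ N = y ^ (2 * N) := by rw [mul_pow, hq.pow_eq_one, one_mul, pow_mul]
  have hyN : (-(q * y)) ^ N ≠ 1 := fun h => hy <| by
    calc y ^ (2 * N) = (-(q * y)) ^ (2 * N) := by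
          rw [(even_two_mul N).neg_pow, mul_pow, mul_comm 2 N, pow_mul q, hq.pow_eq_one, one_pow,
            one_mul]
      _ = 1 := by rw [mul_comm 2 N, pow_mul, h, one_pow]
  have ha := qPoch_ne_zero_of_pow_ne_one hq.pow_eq_one (haN ▸ hy)
  have hself := qPoch_self_ne_zero_of_isPrimitiveRoot hq
  have hpair := (isBaileyPair_seedAlpha hself (ha _)
    (qPoch_ne_zero_of_pow_ne_one hq.pow_eq_one hyN _)).iterate_step hself (ha _) i
  rw [← haN, hpair.one_sub_pow_mul hq (haN ▸ hy)]
  refine sum_congr rfl fun r hr => ?_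
  have hbinom : (-1) ^ r * q ^ (r + 1).choose 2 * qBinom q (N - 1) r = 1 := by
    rw [mul_assoc, qBinom_pred_of_isPrimitiveRoot hq (mem_range.1 hr), ← mul_pow]
    norm_num
  have hsq : q ^ r ^ 2 = q ^ (r + 1).choose 2 * q ^ r.choose 2 := by
    rw [← pow_add, ← sq_eq_choose_add_choose]
  rw [div_eq_iff (ha r), seedAlpha, thetaExponent, neg_pow, mul_pow _ (q ^ r ^ 2), ← pow_mul q,
    hsq]
  linear_combination (q ^ r.choose 2 * q ^ (r ^ 2 * i) * ((q * y ^ 2) ^ r) ^ i * y ^ r *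
    qPoch (q * y ^ 2) q r * (1 - q * y ^ 2 * q ^ (2 * r))) * hbinom

theorem differentiableAt_iterate_baileyStep {q c : ℂ} (h : ∀ n, qPoch (-(q * c)) q n ≠ 0)
    (i n : ℕ) :
    DifferentiableAt ℂ
      (fun y => (baileyStep (q * y ^ 2) q)^[i] (fun n => (qPoch (-(q * y)) q n)⁻¹) n) c := by
  induction i generalizing n with
  | zero =>
    have hdiff : DifferentiableAt ℂ (fun y => qPoch (-(q * y)) q n) c := by
      unfold qPoch
      fun_prop
    exact hdiff.fun_inv (h n)
  | succ i ih =>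
    simp only [Function.iterate_succ_apply', baileyStep]
    exact DifferentiableAt.fun_sum fun r _ => .fun_mul (by fun_prop) (ih r)

theorem hasDerivAt_partialTheta (q : ℂ) (i N : ℕ) :
    HasDerivAt
      (fun y => ∑ r ∈ range N,
        q ^ thetaExponent i r * y ^ ((2 * i + 1) * r) * (1 - y ^ 2 * q ^ (2 * r + 1)))
      (∑ r ∈ range N, q ^ thetaExponent i r *
        ((2 * i + 1) * r * (1 - q ^ (2 * r + 1)) - 2 * q ^ (2 * r + 1))) 1 := by
  refine HasDerivAt.fun_sum fun r _ => ?_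
  have hpow := (hasDerivAt_pow ((2 * i + 1) * r) (1 : ℂ)).const_mul (q ^ thetaExponent i r)
  have hsq := ((hasDerivAt_pow 2 (1 : ℂ)).mul_const (q ^ (2 * r + 1))).const_sub 1
  refine (hpow.fun_mul hsq).congr_deriv ?_
  push_cast
  simp only [one_pow]
  ring

open scoped Topology in
theorem neg_two_mul_mul_iterate_baileyStep {q : ℂ} {N : ℕ} (hq : IsPrimitiveRoot q N) (hN : Odd N)
    (i : ℕ) :
    -(2 * N) * (baileyStep q q)^[i] (fun n => (qPoch (-q) q n)⁻¹) (N - 1) =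
      ∑ r ∈ range N, q ^ thetaExponent i r *
        ((2 * i + 1) * r * (1 - q ^ (2 * r + 1)) - 2 * q ^ (2 * r + 1)) := by
  have hpoch : ∀ n, qPoch (-(q * 1)) q n ≠ 0 := by
    refine qPoch_ne_zero_of_pow_ne_one hq.pow_eq_one ?_
    rw [mul_one, hN.neg_pow, hq.pow_eq_one]
    norm_num
  have hpow := hasDerivAt_pow (2 * N) (1 : ℂ)
  have hbailey := (differentiableAt_iterate_baileyStep hpoch i (N - 1)).hasDerivAt
  have hleft := (hpow.const_sub 1).fun_mul hbailey
  have hright := hasDerivAt_partialTheta q i N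
  have hne : ∀ᶠ y in 𝓝[≠] (1 : ℂ), y ^ (2 * N) ≠ 1 :=
    hpow.eventually_ne (by simpa using hN.pos.ne')
  have heq := (hleft.continuousAt.eventuallyEq_nhds_iff_eventuallyEq_nhdsNE
    hright.continuousAt).1 (hne.mono fun y hy => one_sub_pow_mul_iterate_baileyStep hq hy i)
  simpa using hleft.unique (hright.congr_of_eventuallyEq heq)

/-! ### The multi-sum as a Bailey chain -/

theorem sum_piFinset_snoc {α R : Type*} [AddCommMonoid R] {n : ℕ} (s : Finset α)
    (f : (Fin (n + 1) → α) → R) :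
    ∑ g ∈ Fintype.piFinset (fun _ : Fin (n + 1) => s), f g =
      ∑ x ∈ s, ∑ g ∈ Fintype.piFinset (fun _ : Fin n => s), f (Fin.snoc g x) := by
  rw [← sum_product']
  refine (sum_equiv (Fin.snocEquiv fun _ => α) (fun p => ?_) fun p _ => rfl).symm
  simp [Fin.snocEquiv, Fin.forall_fin_succ', and_comm]

theorem pad_snoc {k : ℕ} (g : Fin k → ℕ) (n : ℕ) :
    pad (k + 1) (Fin.snoc g n) = Function.update (pad k g) k n := by
  ext j
  rcases lt_trichotomy j k with h | rfl | h
  · simp [pad, Fin.snoc, h, h.ne, Nat.lt_succ_of_lt h]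
  · simp [pad, Fin.snoc]
  · simp [pad, h.ne', h.not_gt, Nat.not_lt.2 h]

/-- The part of the general term of `Z (k + 2) N q` that involves the variables `n_1, …, n_{k+1}`,
apart from the quadratic phase of the last one. -/
noncomputable def chainWeight (k : ℕ) (q : ℂ) (p : ℕ → ℕ) : ℂ :=
  (∏ i ∈ range k, q ^ (p i ^ 2 + p i) * qBinom q (p (i + 1)) (p i)) / qPoch (-q) q (p 0)

theorem chainWeight_update (k : ℕ) (q : ℂ) (p : ℕ → ℕ) (n : ℕ) :
    chainWeight (k + 1) q (Function.update p (k + 1) n) =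
      q ^ (p k ^ 2 + p k) * qBinom q n (p k) * chainWeight k q p := by
  have hprod : ∏ i ∈ range k, q ^ (Function.update p (k + 1) n i ^ 2 +
        Function.update p (k + 1) n i) * qBinom q (Function.update p (k + 1) n (i + 1))
          (Function.update p (k + 1) n i) =
      ∏ i ∈ range k, q ^ (p i ^ 2 + p i) * qBinom q (p (i + 1)) (p i) := by
    refine prod_congr rfl fun i hi => ?_
    have hik := mem_range.1 hi
    rw [Function.update_of_ne (by lia), Function.update_of_ne (by lia)]
  rw [chainWeight, prod_range_succ, hprod, Function.update_self, Function.update_of_ne (by lia),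
    Function.update_of_ne (by lia), chainWeight]
  ring

theorem sum_mul_chainWeight (q : ℂ) (N k : ℕ) (F : ℕ → ℂ) :
    ∑ g ∈ Fintype.piFinset (fun _ : Fin (k + 1) => range N),
        F (pad (k + 1) g k) * chainWeight k q (pad (k + 1) g) =
      ∑ n ∈ range N, F n * (baileyStep q q)^[k] (fun n => (qPoch (-q) q n)⁻¹) n := by
  induction k generalizing F with
  | zero => simp [sum_piFinset_snoc, pad_snoc, chainWeight]
  | succ k ih =>
    rw [sum_piFinset_snoc]
    refine sum_congr rfl fun n hn => ?_
    simp only [pad_snoc _ n, Function.update_self, chainWeight_update, ← mul_sum]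
    rw [ih fun r => q ^ (r ^ 2 + r) * qBinom q n r, Function.iterate_succ_apply', baileyStep]
    congr 1
    have hsub : range (n + 1) ⊆ range N := range_subset_range.2 (mem_range.1 hn)
    rw [← sum_subset hsub fun r _ hr => by
      rw [qBinom_of_lt (by simpa using hr), mul_zero, zero_mul]]
    exact sum_congr rfl fun r _ => by ring

theorem Z_eq_sum_iterate_baileyStep (q : ℂ) (N k : ℕ) :
    Z (k + 2) N q = ∑ n ∈ range N, (-1) ^ n * q ^ (n + 1).choose 2 *
      (baileyStep q q)^[k] (fun n => (qPoch (-q) q n)⁻¹) n := by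
  rw [← sum_mul_chainWeight]
  refine sum_congr rfl fun g _ => ?_
  simp only [Pterm, chainWeight, Nat.add_sub_cancel, Nat.add_one_sub_one, prod_mul_distrib,
    prod_pow_eq_pow_sum, sum_add_distrib, Nat.choose_two_right, pow_add, mul_comm (_ + 1)]
  ring

theorem Z_of_isPrimitiveRoot {q : ℂ} {N : ℕ} (hq : IsPrimitiveRoot q N) (hN : 0 < N) (k : ℕ) :
    Z (k + 2) N q = (baileyStep q q)^[k + 1] (fun n => (qPoch (-q) q n)⁻¹) (N - 1) := by
  rw [Z_eq_sum_iterate_baileyStep, Function.iterate_succ_apply', baileyStep, Nat.sub_add_cancel hN]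
  refine sum_congr rfl fun r hr => ?_
  rw [← qBinom_pred_of_isPrimitiveRoot hq (mem_range.1 hr)]
  have hpow : q ^ (r + 1).choose 2 * q ^ (r + 1).choose 2 = q ^ r * q ^ r ^ 2 := by
    rw [← pow_add, ← pow_add, sq_eq_choose_add_choose, Nat.choose_succ_succ' r 1,
      Nat.choose_one_right]
    congr 1
    ring
  linear_combination (qBinom q (N - 1) r *
    (baileyStep q q)^[k] (fun n => (qPoch (-q) q n)⁻¹) r) * hpow

/-! ### The Gauss sum -/

theorem chiP_eq_ite_modEq (m : ℕ) (x : ℤ) :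
    chiP m x = if x ≡ 2 * m - 3 [ZMOD 4 * m - 2] then 1
      else if x ≡ 2 * m + 1 [ZMOD 4 * m - 2] then -1 else 0 :=
  rfl

theorem chiP_neg {m : ℕ} (hm : 2 ≤ m) (x : ℤ) : chiP m (-x) = -chiP m x := by
  have hpos : -x ≡ 2 * m - 3 [ZMOD 4 * m - 2] ↔ x ≡ 2 * m + 1 [ZMOD 4 * m - 2] := by
    rw [Int.modEq_iff_dvd, Int.modEq_iff_dvd, ← dvd_sub_right (dvd_refl _)]
    ring_nf
  have hneg : -x ≡ 2 * m + 1 [ZMOD 4 * m - 2] ↔ x ≡ 2 * m - 3 [ZMOD 4 * m - 2] := by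
    rw [Int.modEq_iff_dvd, Int.modEq_iff_dvd, ← dvd_sub_right (dvd_refl _)]
    ring_nf
  have hdisj : ¬(x ≡ 2 * m - 3 [ZMOD 4 * m - 2] ∧ x ≡ 2 * m + 1 [ZMOD 4 * m - 2]) := by
    rintro ⟨h₁, h₂⟩
    have hdvd := Int.le_of_dvd (by lia) ((h₁.symm.trans h₂).dvd)
    lia
  simp only [chiP_eq_ite_modEq, hpos, hneg]
  grind

theorem chiP_add_mul (m : ℕ) (x j : ℤ) : chiP m (x + (4 * m - 2) * j) = chiP m x := by
  simp only [chiP, Int.add_mul_emod_self_left]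

theorem odd_of_chiP_ne_zero {m : ℕ} {x : ℤ} (h : chiP m x ≠ 0) : Odd x := by
  have hcases : x ≡ 2 * m - 3 [ZMOD 4 * m - 2] ∨ x ≡ 2 * m + 1 [ZMOD 4 * m - 2] := by
    by_contra! hx
    exact h (by rw [chiP_eq_ite_modEq, if_neg hx.1, if_neg hx.2])
  have heven : (2 : ℤ) ∣ 4 * m - 2 := ⟨2 * m - 1, by ring⟩
  rcases hcases with hx | hx <;>
    · have := (hx.of_dvd heven).dvd
      grind

theorem chiP_add_two_of_lt {k t : ℕ} (ht : t < 4 * k + 6) :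
    chiP (k + 2) t = (if t = 2 * k + 1 then 1 else 0) - if t = 2 * k + 5 then 1 else 0 := by
  have hmod : (4 * ((k + 2 : ℕ) : ℤ) - 2) = (4 * k + 6 : ℕ) := by push_cast; ring
  have hone : (2 * ((k + 2 : ℕ) : ℤ) - 3) = (2 * k + 1 : ℕ) := by push_cast; ring
  have hfive : (2 * ((k + 2 : ℕ) : ℤ) + 1) = (2 * k + 5 : ℕ) := by push_cast; ring
  simp only [chiP, hmod, hone, hfive, ← Int.natCast_mod, Nat.mod_eq_of_lt ht, Nat.cast_inj,
    Nat.mod_eq_of_lt (show 2 * k + 1 < 4 * k + 6 by lia),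
    Nat.mod_eq_of_lt (show 2 * k + 5 < 4 * k + 6 by lia)]
  split_ifs <;> lia

theorem sum_range_mul_block {R : Type*} [AddCommMonoid R] (c n : ℕ) (f : ℕ → R) :
    ∑ x ∈ range (c * n), f x = ∑ j ∈ range n, ∑ t ∈ range c, f (c * j + t) := by
  induction n with
  | zero => simp
  | succ n ih => rw [Nat.mul_succ, sum_range_add, ih, sum_range_succ]

theorem sum_chiP_mul {R : Type*} [CommRing R] (k N : ℕ) (f : ℕ → R) :
    ∑ x ∈ range ((4 * k + 6) * N + 1), (chiP (k + 2) x : R) * f x =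
      ∑ j ∈ range N, (f ((4 * k + 6) * j + (2 * k + 1)) - f ((4 * k + 6) * j + (2 * k + 5))) := by
  have hperiod : ∀ j t : ℕ, chiP (k + 2) ((4 * k + 6) * j + t : ℕ) = chiP (k + 2) t :=
    fun j t => by
      rw [← chiP_add_mul (k + 2) t j]
      congr 1
      push_cast
      ring
  have hzero : chiP (k + 2) ((4 * k + 6) * N : ℕ) = 0 := by
    rw [← add_zero ((4 * k + 6) * N), hperiod]
    exact self_eq_neg.1 (chiP_neg (Nat.le_add_left 2 k) 0)
  rw [sum_range_succ, hzero, Int.cast_zero, zero_mul, add_zero, sum_range_mul_block]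
  refine sum_congr rfl fun j _ => ?_
  calc _ = ∑ t ∈ range (4 * k + 6), ((if t = 2 * k + 1 then f ((4 * k + 6) * j + t) else 0) -
          if t = 2 * k + 5 then f ((4 * k + 6) * j + t) else 0) := by
        refine sum_congr rfl fun t ht => ?_
        rw [hperiod, chiP_add_two_of_lt (mem_range.1 ht)]
        push_cast
        rw [sub_mul, ite_mul, ite_mul, one_mul, zero_mul]
    _ = _ := by
        rw [sum_sub_distrib, sum_ite_eq', sum_ite_eq', if_pos (by grind), if_pos (by grind)]

theorem sum_range_eq_zero_of_reflect_neg {R : Type*} [Ring R] [NoZeroDivisors R] [CharZero R]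
    {L : ℕ} {f : ℕ → R} (h : ∀ x ≤ L, f (L - x) = -f x) : ∑ x ∈ range (L + 1), f x = 0 := by
  refine self_eq_neg.1 ?_
  calc ∑ x ∈ range (L + 1), f x = ∑ x ∈ range (L + 1), f (L - x) := (sum_range_reflect f _).symm
    _ = -∑ x ∈ range (L + 1), f x := by
      rw [← sum_neg_distrib]
      exact sum_congr rfl fun x hx => h x (mem_range_succ_iff.1 hx)

theorem sum_range_mul_sq_of_reflect_neg {R : Type*} [CommRing R] [NoZeroDivisors R] [CharZero R]
    {L : ℕ} {f : ℕ → R} (h : ∀ x ≤ L, f (L - x) = -f x) :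
    ∑ x ∈ range (L + 1), f x * x ^ 2 = L * ∑ x ∈ range (L + 1), f x * x := by
  have hzero : ∑ x ∈ range (L + 1), f x * (x * (L - x)) = 0 :=
    sum_range_eq_zero_of_reflect_neg fun x hx => by
      rw [h x hx, Nat.cast_sub hx]
      ring
  rw [mul_sum, ← sub_eq_zero, ← sum_sub_distrib, ← neg_eq_zero, ← hzero, ← sum_neg_distrib]
  exact sum_congr rfl fun x _ => by ring

/-- The quadratic phase `x ↦ e^{2πiMx²/D}` of the Gauss sum. -/
noncomputable def gaussPhase (M : ℤ) (D x : ℂ) : ℂ :=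
  Complex.exp (2 * Real.pi * Complex.I * M * x ^ 2 / D)

theorem gaussPhase_eq_mul_pow {M : ℤ} {d N x y : ℂ} {e : ℕ} (hd : d ≠ 0)
    (h : x ^ 2 = y ^ 2 + d * e) :
    gaussPhase M (d * N) x =
      gaussPhase M (d * N) y * Complex.exp (2 * Real.pi * Complex.I * M / N) ^ e := by
  rw [gaussPhase, gaussPhase, ← Complex.exp_nat_mul, ← Complex.exp_add, h]
  congr 1
  field_simp

theorem gaussPhase_reflect {k N : ℕ} (hN : Odd N) (M : ℤ) {x : ℤ} (hx : Odd x) :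
    gaussPhase M (8 * (2 * k + 3) * N) ((4 * k + 6) * N - x) =
      gaussPhase M (8 * (2 * k + 3) * N) x := by
  obtain ⟨a, rfl⟩ := hN
  obtain ⟨b, rfl⟩ := hx
  have hk : (2 * k + 3 : ℂ) ≠ 0 := by norm_cast
  have hN : (2 * a + 1 : ℂ) ≠ 0 := by norm_cast
  have hperiod := Complex.exp_int_mul_two_pi_mul_I (M * ((2 * k + 3) * a + k + 1 - b))
  rw [← mul_one (gaussPhase M _ ((2 * b + 1 : ℤ) : ℂ)), ← hperiod, gaussPhase, gaussPhase,
    ← Complex.exp_add]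
  congr 1
  push_cast
  field_simp
  ring

theorem sq_eq_add_mul_thetaExponent (k r : ℕ) :
    ((((4 * k + 6) * r + (2 * k + 1) : ℕ)) : ℂ) ^ 2 =
      (2 * k + 1) ^ 2 + 8 * (2 * k + 3) * thetaExponent (k + 1) r := by
  rw [thetaExponent]
  push_cast [Nat.cast_choose_two]
  ring

theorem sq_eq_add_mul_thetaExponent_add (k r : ℕ) :
    ((((4 * k + 6) * r + (2 * k + 5) : ℕ)) : ℂ) ^ 2 =
      (2 * k + 1) ^ 2 + 8 * (2 * k + 3) * (thetaExponent (k + 1) r + (2 * r + 1) : ℕ) := by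
  rw [thetaExponent]
  push_cast [Nat.cast_choose_two]
  ring

theorem sum_chiP_mul_gaussPhase_mul (k N : ℕ) (M : ℤ) (h : ℕ → ℂ) :
    ∑ x ∈ range ((4 * k + 6) * N + 1),
        (chiP (k + 2) x : ℂ) * gaussPhase M (8 * (2 * k + 3) * N) x * h x =
      gaussPhase M (8 * (2 * k + 3) * N) (2 * k + 1) * ∑ r ∈ range N,
        Complex.exp (2 * Real.pi * Complex.I * M / N) ^ thetaExponent (k + 1) r *
          (h ((4 * k + 6) * r + (2 * k + 1)) -
            Complex.exp (2 * Real.pi * Complex.I * M / N) ^ (2 * r + 1) *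
              h ((4 * k + 6) * r + (2 * k + 5))) := by
  have hd : (8 * (2 * k + 3) : ℂ) ≠ 0 := by norm_cast
  simp only [mul_assoc (chiP (k + 2) _ : ℂ), sum_chiP_mul,
    gaussPhase_eq_mul_pow hd (sq_eq_add_mul_thetaExponent k _),
    gaussPhase_eq_mul_pow hd (sq_eq_add_mul_thetaExponent_add k _), mul_sum, pow_add]
  exact sum_congr rfl fun r _ => by ring

theorem chiP_mul_gaussPhase_reflect {k N : ℕ} (hN : Odd N) (M : ℤ) {x : ℕ}
    (hx : x ≤ (4 * k + 6) * N) :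
    (chiP (k + 2) ((4 * k + 6) * N - x : ℕ) : ℂ) *
        gaussPhase M (8 * (2 * k + 3) * N) ((4 * k + 6) * N - x : ℕ) =
      -((chiP (k + 2) x : ℂ) * gaussPhase M (8 * (2 * k + 3) * N) x) := by
  have hchi : chiP (k + 2) ((4 * k + 6) * N - x : ℕ) = -chiP (k + 2) x := by
    rw [← chiP_neg (Nat.le_add_left 2 k), ← chiP_add_mul _ (-x) N, Nat.cast_sub hx]
    congr 1
    push_cast
    ring
  rw [hchi]
  rcases eq_or_ne (chiP (k + 2) x) 0 with h | h
  · simp [h]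
  · have hphase := gaussPhase_reflect (k := k) hN M (odd_of_chiP_ne_zero h)
    rw [Nat.cast_sub hx]
    push_cast at hphase ⊢
    rw [hphase, neg_mul]

theorem neg_four_mul_mul_Z {k N : ℕ} {M : ℤ} (hN : Odd N) (hMN : IsCoprime M (N : ℤ)) :
    -(4 * N) * gaussPhase M (8 * (2 * k + 3) * N) (2 * k + 1) *
        Z (k + 2) N (Complex.exp (2 * Real.pi * Complex.I * M / N)) =
      ∑ x ∈ range ((4 * k + 6) * N + 1),
        (chiP (k + 2) x : ℂ) * gaussPhase M (8 * (2 * k + 3) * N) x * x := by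
  have hroot : IsPrimitiveRoot (Complex.exp (2 * Real.pi * Complex.I * M / N)) N := by
    simpa only [mul_div_assoc] using
      Complex.isPrimitiveRoot_exp_of_isCoprime M N hN.pos.ne' hMN
  have hZ := neg_two_mul_mul_iterate_baileyStep hroot hN (k + 1)
  rw [← Z_of_isPrimitiveRoot hroot hN.pos] at hZ
  have hsum := sum_range_eq_zero_of_reflect_neg
    (f := fun x => (chiP (k + 2) x : ℂ) * gaussPhase M (8 * (2 * k + 3) * N) x)
    fun x hx => chiP_mul_gaussPhase_reflect hN M hx
  have hone := sum_chiP_mul_gaussPhase_mul k N M fun _ => 1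
  simp only [mul_one, hsum] at hone
  rw [sum_chiP_mul_gaussPhase_mul k N M fun x => x]
  set ζ := Complex.exp (2 * Real.pi * Complex.I * M / N)
  have hsplit : ∑ r ∈ range N, ζ ^ thetaExponent (k + 1) r *
        ((((4 * k + 6) * r + (2 * k + 1) : ℕ) : ℂ) -
          ζ ^ (2 * r + 1) * ((4 * k + 6) * r + (2 * k + 5) : ℕ)) =
      2 * ∑ r ∈ range N, ζ ^ thetaExponent (k + 1) r *
          ((2 * ((k + 1 : ℕ) : ℂ) + 1) * r * (1 - ζ ^ (2 * r + 1)) - 2 * ζ ^ (2 * r + 1)) +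
        (2 * k + 1) * ∑ r ∈ range N, ζ ^ thetaExponent (k + 1) r * (1 - ζ ^ (2 * r + 1)) := by
    rw [mul_sum, mul_sum, ← sum_add_distrib]
    refine sum_congr rfl fun r _ => ?_
    push_cast
    ring
  rw [hsplit, ← hZ]
  linear_combination (2 * k + 1) * hone

theorem Z_add_two_of_isCoprime {k N : ℕ} {M : ℤ} (hN : Odd N) (hMN : IsCoprime M (N : ℤ)) :
    Z (k + 2) N (Complex.exp (2 * Real.pi * Complex.I * M / N)) =
      -(1 / (8 * (2 * k + 3) * N ^ 2)) * (gaussPhase M (8 * (2 * k + 3) * N) (2 * k + 1))⁻¹ *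
        ∑ x ∈ range ((4 * k + 6) * N + 1),
          (chiP (k + 2) x : ℂ) * gaussPhase M (8 * (2 * k + 3) * N) x * x ^ 2 := by
  have hk : (2 * k + 3 : ℂ) ≠ 0 := by norm_cast
  have hN₀ : (N : ℂ) ≠ 0 := Nat.cast_ne_zero.2 hN.pos.ne'
  have hphase : gaussPhase M (8 * (2 * k + 3) * N) (2 * k + 1) ≠ 0 := Complex.exp_ne_zero _
  rw [sum_range_mul_sq_of_reflect_neg
    (f := fun x => (chiP (k + 2) x : ℂ) * gaussPhase M (8 * (2 * k + 3) * N) x)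
    fun x hx => chiP_mul_gaussPhase_reflect hN M hx, ← neg_four_mul_mul_Z hN hMN]
  generalize gaussPhase M (8 * (2 * k + 3) * N) (2 * k + 1) = g at hphase ⊢
  push_cast
  field_simp
  ring

theorem stmt9 (m : ℕ) (hm : 2 ≤ m) (M : ℤ) (N : ℕ) (hN : 0 < N) (hNodd : Odd N)
    (hMN : IsCoprime M (N : ℤ)) :
    Z m N (Complex.exp (2 * Real.pi * Complex.I * M / N)) =
      -(1 / (8 * (2 * (m : ℂ) - 1) * (N : ℂ) ^ 2)) *
        Complex.exp (-(2 * Real.pi * Complex.I * M * ((2 * (m : ℂ) - 3) ^ 2) /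
          (8 * (2 * m - 1) * N))) *
        ∑ k ∈ Finset.range ((4 * m - 2) * N + 1),
          (k : ℂ) ^ 2 * (chiP m k : ℂ) *
            Complex.exp (2 * Real.pi * Complex.I * M * (k : ℂ) ^ 2 / (8 * (2 * m - 1) * N)) := by
  obtain ⟨k, rfl⟩ := Nat.exists_eq_add_of_le' hm
  have hfirst : 2 * ((k + 2 : ℕ) : ℂ) - 3 = 2 * k + 1 := by push_cast; ring
  have hscale : 2 * ((k + 2 : ℕ) : ℂ) - 1 = 2 * k + 3 := by push_cast; ring
  have hperiod : 4 * (k + 2) - 2 = 4 * k + 6 := by lia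
  rw [Z_add_two_of_isCoprime hNodd hMN, hfirst, hscale, hperiod, Complex.exp_neg]
  simp only [gaussPhase, mul_comm ((_ : ℂ) ^ 2) (chiP _ _ : ℂ), mul_right_comm]
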